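/- arXiv:2104.02563 — 2 statements merged into one kernel-verified Lean document; each statement's English description precedes it below -/
import Mathlib

section
/- Let G = (X, E) be a finite simple graph on a set X of n Boolean variables, let {e_1, …, e_m} be an induced matching of G, and let (X_1, X_2) be a partition of X such that every edge e_i has one endpoint in X_1 and one endpoint in X_2. Then every combinatorial rectangle with partition (X_1, X_2) that is monochromatic with respect to IP_G has size at most 2^{n − m}. -/
/-!
View assignments as vectors over `𝔽₂`, so that `IP_G` becomes the quadratic form
`Q s = ∑_{xy ∈ E} s x * s y` (`edgeQuad`), with polar form `β` (`edgePolar`). Fix `τ₀` in a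
monochromatic rectangle `R`. For `τ, σ ∈ R`, let `s` be the `X₁`-part of `τ - τ₀` and `t` the
`X₁ᶜ`-part of `σ - τ₀`; the vectors `τ₀`, `τ₀ + s`, `τ₀ + t`, `τ₀ + s + t` all lie in `R`, so
`β s t = Q (τ₀ + s + t) - Q (τ₀ + s) - Q (τ₀ + t) + Q τ₀ = 0` (`edgePolar_proj_eq_zero`).
Hence the span `D` of `R - τ₀` is totally isotropic for the polar form `ω` of the graph of edges
crossing the partition (`crossForm`).

The unit vectors at the endpoints `a i`, `b i` of the induced matching and those at the partners
`b i`, `a i` are dual systems for `ω`, so `ω` has rank at least `2 m`, and a totally isotropic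
subspace satisfies `2 dim D + 2 m ≤ 2 n` (`two_mul_finrank_add_card_le`). Since `R` is contained in
a translate of `D`, it has at most `2 ^ (n - m)` elements.
-/

/-- `R` is a combinatorial rectangle with partition `(X, V \ X)`: there are sets `A` of
assignments of `X` and `B` of assignments of `V \ X` such that `R = A × B`. -/
def IsRectangle {V : Type*} (X : Finset V) (R : Set (V → Bool)) : Prop :=
  ∃ (A : Set ({v : V // v ∈ X} → Bool)) (B : Set ({v : V // v ∉ X} → Bool)),
    ∀ τ : V → Bool,
      τ ∈ R ↔ ((fun v : {v : V // v ∈ X} => τ v) ∈ A ∧ (fun v : {v : V // v ∉ X} => τ v) ∈ B)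

/-- `IPG G τ = ⊕_{{x,y} ∈ E(G)} (τ x && τ y)`. -/
def IPG {V : Type*} [Fintype V] [DecidableEq V] (G : SimpleGraph V) [DecidableRel G.Adj]
    (τ : V → Bool) : Bool :=
  decide (Odd ((G.edgeFinset.filter fun e =>
    Sym2.lift ⟨fun a b => τ a && τ b, fun a b => Bool.and_comm (τ a) (τ b)⟩ e = true).card))

section LinearAlgebra

open Module

/-- A totally isotropic subspace of a bilinear form of rank at least `k` (witnessed by
dual systems `c`, `d` of `k` vectors) has dimension at most `dim E - k / 2`: `ω` maps it into its
annihilator, with kernel no larger than that of `ω`. -/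
theorem two_mul_finrank_add_card_le {K E ι : Type*} [Field K] [AddCommGroup E] [Module K E]
    [FiniteDimensional K E] [Fintype ι] [DecidableEq ι] (ω : E →ₗ[K] E →ₗ[K] K)
    (D : Submodule K E) (hD : ∀ x ∈ D, ∀ y ∈ D, ω x y = 0) (c d : ι → E)
    (hcd : ∀ i j, ω (c i) (d j) = if i = j then 1 else 0) :
    2 * finrank K D + Fintype.card ι ≤ 2 * finrank K E := by
  have hli : LinearIndependent K (fun i => ω (c i)) := by
    rw [Fintype.linearIndependent_iff]
    intro g hg j
    have h := LinearMap.congr_fun hg (d j)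
    simpa [LinearMap.sum_apply, hcd] using h
  have h1 : Fintype.card ι ≤ finrank K (LinearMap.range ω) := by
    rw [← finrank_span_eq_card hli]
    apply Submodule.finrank_mono
    rw [Submodule.span_le]
    rintro _ ⟨i, rfl⟩
    exact LinearMap.mem_range_self ω (c i)
  have h2 := LinearMap.finrank_range_add_finrank_ker ω
  have h3 := LinearMap.finrank_range_add_finrank_ker (ω.domRestrict D)
  have h4 : finrank K (LinearMap.ker (ω.domRestrict D)) ≤ finrank K (LinearMap.ker ω) := by
    rw [← Submodule.finrank_map_subtype_eq D]
    apply Submodule.finrank_mono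
    rintro _ ⟨x, hx, rfl⟩
    exact hx
  have h5 : finrank K (LinearMap.range (ω.domRestrict D))
      ≤ finrank K (Submodule.dualAnnihilator D) := by
    apply Submodule.finrank_mono
    rintro _ ⟨x, rfl⟩
    rw [Submodule.mem_dualAnnihilator]
    exact fun y hy => hD x x.2 y hy
  have h6 := Subspace.finrank_add_finrank_dualAnnihilator_eq D
  omega

end LinearAlgebra

section Forms

variable {V : Type*} [Fintype V] [DecidableEq V] (G : SimpleGraph V) [DecidableRel G.Adj]

/-- An assignment viewed as a vector over the field with two elements. -/
def toVec (τ : V → Bool) : V → ZMod 2 := fun v => if τ v then 1 else 0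

/-- The quadratic form `∑_{xy ∈ E} s x * s y` over the field with two elements, of which
`IPG` is the Boolean version. -/
def edgeQuad (s : V → ZMod 2) : ZMod 2 :=
  ∑ e ∈ G.edgeFinset, Sym2.lift ⟨fun p q => s p * s q, fun _ _ => mul_comm _ _⟩ e

/-- The polar form `∑_{xy ∈ E} (s x * t y + s y * t x)` of `edgeQuad`. -/
def edgePolar : (V → ZMod 2) →ₗ[ZMod 2] (V → ZMod 2) →ₗ[ZMod 2] ZMod 2 :=
  LinearMap.mk₂ (ZMod 2)
    (fun s t => ∑ e ∈ G.edgeFinset,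
      Sym2.lift ⟨fun p q => s p * t q + s q * t p, fun _ _ => add_comm _ _⟩ e)
    (by
      intro s s' t
      rw [← Finset.sum_add_distrib]
      refine Finset.sum_congr rfl fun e _ => ?_
      induction e with | _ p q
      simp only [Sym2.lift_mk, Pi.add_apply]; ring)
    (by
      intro r s t
      rw [Finset.smul_sum]
      refine Finset.sum_congr rfl fun e _ => ?_
      induction e with | _ p q
      simp only [Sym2.lift_mk, Pi.smul_apply, smul_eq_mul]; ring)
    (by
      intro s t t'
      rw [← Finset.sum_add_distrib]
      refine Finset.sum_congr rfl fun e _ => ?_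
      induction e with | _ p q
      simp only [Sym2.lift_mk, Pi.add_apply]; ring)
    (by
      intro r s t
      rw [Finset.smul_sum]
      refine Finset.sum_congr rfl fun e _ => ?_
      induction e with | _ p q
      simp only [Sym2.lift_mk, Pi.smul_apply, smul_eq_mul]; ring)

omit [DecidableEq V] in
theorem edgePolar_apply (s t : V → ZMod 2) :
    edgePolar G s t = ∑ e ∈ G.edgeFinset,
      Sym2.lift ⟨fun p q => s p * t q + s q * t p, fun _ _ => add_comm _ _⟩ e := rfl

omit [DecidableEq V] in
theorem edgePolar_comm (s t : V → ZMod 2) : edgePolar G s t = edgePolar G t s := by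
  rw [edgePolar_apply, edgePolar_apply]
  refine Finset.sum_congr rfl fun e _ => ?_
  induction e with | _ p q
  simp only [Sym2.lift_mk]; ring

omit [DecidableEq V] in
/-- Mixed second differences of `edgeQuad` do not depend on the base point `τ`. -/
theorem edgePolar_eq (τ s t : V → ZMod 2) :
    edgePolar G s t = edgeQuad G (τ + s + t) - edgeQuad G (τ + s) - edgeQuad G (τ + t)
      + edgeQuad G τ := by
  simp only [edgePolar_apply, edgeQuad, ← Finset.sum_add_distrib, ← Finset.sum_sub_distrib]
  refine Finset.sum_congr rfl fun e _ => ?_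
  induction e with | _ p q
  simp only [Sym2.lift_mk, Pi.add_apply]; ring

theorem edgePolar_single (p q : V) :
    edgePolar G (Pi.single p 1) (Pi.single q 1) = if G.Adj p q then 1 else 0 := by
  have h : ∀ e ∈ G.edgeFinset, Sym2.lift ⟨fun u v =>
      (Pi.single p 1 : V → ZMod 2) u * (Pi.single q 1 : V → ZMod 2) v
        + (Pi.single p 1 : V → ZMod 2) v * (Pi.single q 1 : V → ZMod 2) u,
      fun _ _ => add_comm _ _⟩ e = if e = s(p, q) then 1 else 0 := by
    intro e he
    induction e with | _ u v
    have huv : u ≠ v := G.ne_of_adj (by simpa using he)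
    simp only [Sym2.lift_mk, Pi.single_apply, Sym2.eq_iff]
    split_ifs <;> grind
  rw [edgePolar_apply, Finset.sum_congr rfl h]
  simp

theorem edgeQuad_toVec (τ : V → Bool) :
    edgeQuad G (toVec τ) = if IPG G τ then 1 else 0 := by
  have h : edgeQuad G (toVec τ) = (((G.edgeFinset.filter fun e =>
      Sym2.lift ⟨fun a b => τ a && τ b, fun a b => Bool.and_comm (τ a) (τ b)⟩ e = true).card : ℕ)
        : ZMod 2) := by
    rw [edgeQuad, Finset.card_filter, Nat.cast_sum]
    refine Finset.sum_congr rfl fun e _ => ?_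
    induction e with | _ p q
    simp only [Sym2.lift_mk, toVec]
    by_cases hp : τ p = true <;> by_cases hq : τ q = true <;> simp [hp, hq]
  rw [h, IPG]
  split_ifs with hodd
  · exact ZMod.natCast_eq_one_iff_odd.mpr (by simpa using hodd)
  · exact ZMod.natCast_eq_zero_iff_even.mpr (by simpa using hodd)

/-- The coordinate projection onto the vectors supported on the set `{v | P v}`. -/
def proj (P : V → Prop) [DecidablePred P] : (V → ZMod 2) →ₗ[ZMod 2] (V → ZMod 2) where
  toFun s v := if P v then s v else 0
  map_add' s t := by ext v; by_cases h : P v <;> simp [h]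
  map_smul' r s := by ext v; by_cases h : P v <;> simp [h]

omit [Fintype V] in
theorem proj_single (P : V → Prop) [DecidablePred P] (p : V) :
    proj P (Pi.single p 1) = if P p then Pi.single p 1 else 0 := by
  ext v
  by_cases h : v = p
  · subst h; by_cases hP : P v <;> simp [proj, hP]
  · by_cases hP : P p <;> simp [proj, hP, h]

/-- The polar form of the subgraph of those edges of `G` that cross the partition `(X, Xᶜ)`. -/
def crossForm (X : Finset V) : (V → ZMod 2) →ₗ[ZMod 2] (V → ZMod 2) →ₗ[ZMod 2] ZMod 2 :=
  (edgePolar G).compl₁₂ (proj (· ∈ X)) (proj (· ∉ X))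
    + (edgePolar G).compl₁₂ (proj (· ∉ X)) (proj (· ∈ X))

theorem crossForm_single (X : Finset V) (p q : V) :
    crossForm G X (Pi.single p 1) (Pi.single q 1)
      = if G.Adj p q ∧ (p ∈ X ↔ q ∉ X) then 1 else 0 := by
  simp only [crossForm, LinearMap.add_apply, LinearMap.compl₁₂_apply, proj_single]
  by_cases hp : p ∈ X <;> by_cases hq : q ∈ X <;> simp [hp, hq, edgePolar_single]

/-- Exchanging the two sides of `τ₀` for those of `τ` and `σ` stays inside the rectangle, so the
mixed second difference of the constant function `edgeQuad` vanishes there. -/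
theorem edgePolar_proj_eq_zero (X : Finset V) (R : Set (V → Bool)) (hR : IsRectangle X R)
    (c : Bool) (hmono : ∀ τ ∈ R, IPG G τ = c) {τ₀ τ σ : V → Bool}
    (h₀ : τ₀ ∈ R) (hτ : τ ∈ R) (hσ : σ ∈ R) :
    edgePolar G (proj (· ∈ X) (toVec τ - toVec τ₀)) (proj (· ∉ X) (toVec σ - toVec τ₀)) = 0 := by
  obtain ⟨A, B, hAB⟩ := hR
  have mix : ∀ ρ ∈ R, ∀ ρ' ∈ R, (fun v => if v ∈ X then ρ v else ρ' v) ∈ R := by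
    intro ρ hρ ρ' hρ'
    rw [hAB] at hρ hρ' ⊢
    refine ⟨?_, ?_⟩
    · convert hρ.1 using 2 with v
      simp [v.2]
    · convert hρ'.2 using 2 with v
      simp [v.2]
  have hc : ∀ ρ ∈ R, edgeQuad G (toVec ρ) = if c then 1 else 0 := fun ρ hρ => by
    rw [edgeQuad_toVec, hmono ρ hρ]
  have e1 : toVec τ₀ + proj (· ∈ X) (toVec τ - toVec τ₀)
      = toVec (fun v => if v ∈ X then τ v else τ₀ v) := by
    ext v; by_cases h : v ∈ X <;> simp [proj, toVec, h]
  have e2 : toVec τ₀ + proj (· ∉ X) (toVec σ - toVec τ₀)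
      = toVec (fun v => if v ∈ X then τ₀ v else σ v) := by
    ext v; by_cases h : v ∈ X <;> simp [proj, toVec, h]
  have e3 : toVec τ₀ + proj (· ∈ X) (toVec τ - toVec τ₀) + proj (· ∉ X) (toVec σ - toVec τ₀)
      = toVec (fun v => if v ∈ X then τ v else σ v) := by
    ext v; by_cases h : v ∈ X <;> simp [proj, toVec, h]
  rw [edgePolar_eq G (toVec τ₀), e3, e1, e2, hc _ (mix _ hτ _ hσ), hc _ (mix _ hτ _ h₀),
    hc _ (mix _ h₀ _ hσ), hc _ h₀]
  ring

omit [Fintype V] [DecidableEq V] in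
theorem toVec_injective : Function.Injective (toVec : (V → Bool) → V → ZMod 2) := by
  intro τ σ h
  ext v
  have := congrFun h v
  simp only [toVec] at this
  cases hτ : τ v <;> cases hσ : σ v <;> simp_all

end Forms

/-- Let `e_1, …, e_m` (with endpoints `a i`, `b i`) be an induced matching of a graph `G`
on `n` vertices, and let `(X₁, X₁ᶜ)` be a partition of the vertices such that each edge
`e_i` has one endpoint in `X₁` and one in `X₁ᶜ`.  Then every combinatorial rectangle with
partition `(X₁, X₁ᶜ)` that is monochromatic with respect to `IP_G` has size at most
`2 ^ (n - m)`. -/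
theorem ipg_monochromatic_rectangle_le {V : Type*} [Fintype V] [DecidableEq V]
    (G : SimpleGraph V) [DecidableRel G.Adj]
    (m : ℕ) (a b : Fin m → V)
    (hadj : ∀ i, G.Adj (a i) (b i))
    (hdisj : ∀ i j, i ≠ j → a i ≠ a j ∧ a i ≠ b j ∧ b i ≠ a j ∧ b i ≠ b j)
    (hind : ∀ i j, i ≠ j →
      ¬ G.Adj (a i) (a j) ∧ ¬ G.Adj (a i) (b j) ∧ ¬ G.Adj (b i) (a j) ∧ ¬ G.Adj (b i) (b j))
    (X₁ : Finset V)
    (hcross : ∀ i, (a i ∈ X₁ ∧ b i ∉ X₁) ∨ (a i ∉ X₁ ∧ b i ∈ X₁))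
    (R : Set (V → Bool)) (hR : IsRectangle X₁ R)
    (c : Bool) (hmono : ∀ τ ∈ R, IPG G τ = c) :
    R.ncard ≤ 2 ^ (Fintype.card V - m) := by
  classical
  rcases R.eq_empty_or_nonempty with rfl | ⟨τ₀, h₀⟩
  · simp
  let D : Submodule (ZMod 2) (V → ZMod 2) :=
    Submodule.span (ZMod 2) ((fun τ => toVec τ - toVec τ₀) '' R)
  have hD : ∀ x ∈ D, ∀ y ∈ D, crossForm G X₁ x y = 0 := by
    intro x hx y hy
    induction hx, hy using Submodule.span_induction₂ with
    | mem_mem x y hx hy =>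
      obtain ⟨τ, hτ, rfl⟩ := hx
      obtain ⟨σ, hσ, rfl⟩ := hy
      rw [crossForm, LinearMap.add_apply, LinearMap.add_apply, LinearMap.compl₁₂_apply,
        LinearMap.compl₁₂_apply, edgePolar_comm G (proj (· ∉ X₁) _),
        edgePolar_proj_eq_zero G X₁ R hR c hmono h₀ hτ hσ,
        edgePolar_proj_eq_zero G X₁ R hR c hmono h₀ hσ hτ, add_zero]
    | zero_left y hy => simp
    | zero_right x hx => simp
    | add_left x y z _ _ _ h1 h2 => simp [h1, h2]
    | add_right x y z _ _ _ h1 h2 => simp [h1, h2]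
    | smul_left r x y _ _ h => simp [h]
    | smul_right r x y _ _ h => simp [h]
  -- The dual systems are `(a, b)` and its swap `(b, a)`: `ω` pairs each endpoint with its partner.
  have hdim := two_mul_finrank_add_card_le (crossForm G X₁) D hD
    (Sum.elim (fun i => Pi.single (a i) 1) (fun i => Pi.single (b i) 1))
    (Sum.elim (fun i => Pi.single (b i) 1) (fun i => Pi.single (a i) 1) :
      Fin m ⊕ Fin m → V → ZMod 2) (by
    have hadj' := fun i => (hadj i).symm
    rintro (i | i) (j | j) <;> simp only [Sum.elim_inl, Sum.elim_inr, crossForm_single] <;>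
      have h1 := hcross i <;> have h2 := hind i j <;> grind)
  rw [Fintype.card_sum, Fintype.card_fin, Module.finrank_fintype_fun_eq_card] at hdim
  have hcard : R.ncard ≤ Nat.card D := by
    rw [← Nat.card_coe_set_eq]
    refine Nat.card_le_card_of_injective
      (fun τ => (⟨toVec τ.1 - toVec τ₀, Submodule.subset_span ⟨τ.1, τ.2, rfl⟩⟩ : D)) ?_
    intro τ σ h
    exact Subtype.ext (toVec_injective (sub_left_injective (Subtype.ext_iff.mp h)))
  rw [Module.natCard_eq_pow_finrank (K := ZMod 2), Nat.card_zmod] at hcard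
  exact hcard.trans (Nat.pow_le_pow_right two_pos (by omega))
end

section
/- Let G = (X, E) be a finite simple graph with n vertices, maximum degree at most Δ, and expansion at least d with d ≤ 1, and let (X_1, X_2) be a b-balanced partition of X with b > d. Then every combinatorial rectangle with partition (X_1, X_2) that is monochromatic with respect to IP_G has size at most 2^{n − n·d²·b / (2(Δ² + 1))}. -/
/-- The graph `G` has expansion at least `d`: for every nonempty set `V'` of at most half
the vertices, the open neighborhood `N(V')` satisfies `|N(V')| ≥ d·|V'|`. -/
def ExpansionAtLeast {V : Type*} [Fintype V] [DecidableEq V] (G : SimpleGraph V)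
    [DecidableRel G.Adj] (d : ℝ) : Prop :=
  ∀ V' : Finset V, V'.Nonempty → 2 * V'.card ≤ Fintype.card V →
    d * (V'.card : ℝ) ≤
      (((Finset.univ.filter fun w => w ∉ V' ∧ ∃ v ∈ V', G.Adj v w).card : ℕ) : ℝ)

/-! ### Linear algebra over a field -/

/-- A matrix of rank `r` whose rows have at most `D` nonzero entries has at most `r * D` nonzero
columns: the supports of the rows in a basis of the row space cover all of them. -/
lemma card_nonzero_cols_le {m n K : Type*} [Fintype m] [Fintype n] [Field K] [DecidableEq K]
    (M : Matrix m n K) (D : ℕ)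
    (hrow : ∀ i, (Finset.univ.filter fun j => M i j ≠ 0).card ≤ D) :
    (Finset.univ.filter fun j => ∃ i, M i j ≠ 0).card ≤ M.rank * D := by
  classical
  obtain ⟨b, hbs, hspan, hli⟩ := exists_linearIndependent K (Set.range M.row)
  have hbfin : b.Finite := (Set.finite_range _).subset hbs
  have : Fintype b := hbfin.fintype
  have hcard : b.toFinset.card = M.rank := by
    rw [Matrix.rank_eq_finrank_span_row, ← hspan, finrank_span_set_eq_card hli]
  have hcover : (Finset.univ.filter fun j => ∃ i, M i j ≠ 0) ⊆
      b.toFinset.biUnion fun v => Finset.univ.filter fun j => v j ≠ 0 := by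
    intro j hj
    simp only [Finset.mem_filter, Finset.mem_univ, true_and] at hj
    obtain ⟨i, hi⟩ := hj
    by_contra hcon
    simp only [Finset.mem_biUnion, Finset.mem_filter, Finset.mem_univ, true_and,
      Set.mem_toFinset, not_exists, not_and, not_not] at hcon
    apply hi
    have hle : Submodule.span K b ≤ LinearMap.ker (LinearMap.proj (R := K) (φ := fun _ => K) j) :=
      Submodule.span_le.2 fun v hv => by simpa using hcon v hv
    have hmem : M.row i ∈ Submodule.span K b := by
      rw [hspan]; exact Submodule.subset_span ⟨i, rfl⟩
    simpa using hle hmem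
  calc _ ≤ _ := Finset.card_le_card hcover
    _ ≤ b.toFinset.card * D := by
        refine Finset.card_biUnion_le_card_mul _ _ _ fun v hv => ?_
        obtain ⟨i, rfl⟩ := hbs (Set.mem_toFinset.1 hv)
        exact hrow i
    _ = _ := by rw [hcard]

/-- Subspaces that are orthogonal with respect to a matrix of rank `r` have total codimension at
least `r`. -/
lemma rank_add_finrank_le {m n K : Type*} [Fintype m] [Fintype n] [Field K]
    (M : Matrix m n K) (U : Submodule K (m → K)) (W : Submodule K (n → K))
    (h : ∀ u ∈ U, ∀ w ∈ W, u ⬝ᵥ M.mulVec w = 0) :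
    M.rank + Module.finrank K U + Module.finrank K W ≤ Fintype.card m + Fintype.card n := by
  classical
  have hker : M.rank + Module.finrank K (LinearMap.ker M.mulVecLin) = Fintype.card n := by
    have := LinearMap.finrank_range_add_finrank_ker M.mulVecLin
    rwa [Module.finrank_fintype_fun_eq_card] at this
  have hW : Module.finrank K W ≤ Module.finrank K (W.map M.mulVecLin) +
      Module.finrank K (LinearMap.ker M.mulVecLin) := by
    have h1 := LinearMap.finrank_range_add_finrank_ker (M.mulVecLin.domRestrict W)
    rw [LinearMap.range_domRestrict] at h1
    have h2 : Module.finrank K (LinearMap.ker (M.mulVecLin.domRestrict W)) ≤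
        Module.finrank K (LinearMap.ker M.mulVecLin) := by
      rw [← Submodule.finrank_map_subtype_eq]
      refine Submodule.finrank_mono ?_
      rintro _ ⟨w, hw, rfl⟩
      exact hw
    omega
  have hU : Module.finrank K U + Module.finrank K (W.map M.mulVecLin) ≤ Fintype.card m := by
    have h1 := Subspace.finrank_add_finrank_dualAnnihilator_eq U
    rw [Module.finrank_fintype_fun_eq_card] at h1
    have h2 : (W.map M.mulVecLin).map (dotProductEquiv K m).toLinearMap ≤ U.dualAnnihilator := by
      rintro _ ⟨_, ⟨w, hw, rfl⟩, rfl⟩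
      rw [Submodule.mem_dualAnnihilator]
      intro u hu
      simpa [dotProduct_comm] using h u hu w hw
    have h3 := Submodule.finrank_mono h2
    rw [LinearEquiv.finrank_map_eq] at h3
    omega
  omega

/-! ### `IPG` as a bilinear form across the cut -/

/-- The embedding of `Bool` into `𝔽₂`. -/
def bit (x : Bool) : ZMod 2 := if x then 1 else 0

lemma bit_injective : Function.Injective bit := by decide

/-- The polynomial `∑_{{x,y} ∈ E(G)} τ x * τ y` over `𝔽₂`, whose value is `IPG G τ` (see
`bit_IPG`). -/
def ipgSum {V : Type*} [Fintype V] [DecidableEq V] (G : SimpleGraph V) [DecidableRel G.Adj]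
    (τ : V → Bool) : ZMod 2 :=
  ∑ e ∈ G.edgeFinset, Sym2.lift ⟨fun a b => bit (τ a) * bit (τ b), fun _ _ => mul_comm _ _⟩ e

lemma bit_IPG {V : Type*} [Fintype V] [DecidableEq V] (G : SimpleGraph V) [DecidableRel G.Adj]
    (τ : V → Bool) : bit (IPG G τ) = ipgSum G τ := by
  have hsum : ipgSum G τ = (((G.edgeFinset.filter fun e =>
      Sym2.lift ⟨fun a b => τ a && τ b, fun a b => Bool.and_comm (τ a) (τ b)⟩ e = true).card : ℕ) :
        ZMod 2) := by
    rw [Finset.card_filter, Nat.cast_sum, ipgSum]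
    refine Finset.sum_congr rfl fun e _ => ?_
    induction e using Sym2.ind with
    | _ a b =>
      simp only [Sym2.lift_mk, bit]
      by_cases ha : τ a <;> by_cases hb : τ b <;> simp [ha, hb]
  rw [hsum, IPG, bit]
  split_ifs with h
  · exact ((ZMod.natCast_eq_one_iff_odd).2 (by simpa using h)).symm
  · exact ((ZMod.natCast_eq_zero_iff_even).2 (by simpa using h)).symm

/-- The assignment that is `x` on `X` and `y` off `X`. -/
def glue {V : Type*} [DecidableEq V] (X : Finset V) (x : {v : V // v ∈ X} → Bool)
    (y : {v : V // v ∉ X} → Bool) (v : V) : Bool :=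
  if h : v ∈ X then x ⟨v, h⟩ else y ⟨v, h⟩

/-- The bipartite adjacency matrix over `𝔽₂` between `X` and its complement. -/
def cutMatrix {V : Type*} (G : SimpleGraph V) [DecidableRel G.Adj] (X : Finset V) :
    Matrix {v : V // v ∈ X} {v : V // v ∉ X} (ZMod 2) :=
  fun i j => if G.Adj i j then 1 else 0

/-- Only edges across the cut survive in a mixed second difference of `ipgSum`. -/
lemma ipgSum_second_difference {V : Type*} [Fintype V] [DecidableEq V] (G : SimpleGraph V)
    [DecidableRel G.Adj] (X : Finset V) (x x' : {v : V // v ∈ X} → Bool)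
    (y y' : {v : V // v ∉ X} → Bool) :
    (bit ∘ x - bit ∘ x') ⬝ᵥ (cutMatrix G X).mulVec (bit ∘ y - bit ∘ y') =
      ipgSum G (glue X x y) - ipgSum G (glue X x' y) - ipgSum G (glue X x y') +
        ipgSum G (glue X x' y') := by
  have hL : (bit ∘ x - bit ∘ x') ⬝ᵥ (cutMatrix G X).mulVec (bit ∘ y - bit ∘ y') =
      ∑ p ∈ (Finset.univ : Finset ({v : V // v ∈ X} × {v : V // v ∉ X})).filter
        (fun p => G.Adj p.1 p.2),
        (bit (x p.1) - bit (x' p.1)) * (bit (y p.2) - bit (y' p.2)) := by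
    rw [Finset.sum_filter, Fintype.sum_prod_type]
    simp only [dotProduct, Matrix.mulVec, Finset.mul_sum, cutMatrix]
    refine Finset.sum_congr rfl fun i _ => Finset.sum_congr rfl fun j _ => ?_
    split_ifs <;> simp
  rw [hL]
  simp only [ipgSum]
  rw [← Finset.sum_sub_distrib, ← Finset.sum_sub_distrib, ← Finset.sum_add_distrib]
  refine Finset.sum_of_injOn (fun p => s((p.1 : V), (p.2 : V))) ?_ ?_ ?_ ?_
  · rintro ⟨⟨a, ha⟩, ⟨b, hb⟩⟩ _ ⟨⟨a', ha'⟩, ⟨b', hb'⟩⟩ _ h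
    simp only [Sym2.eq_iff] at h
    grind
  · rintro ⟨⟨a, ha⟩, ⟨b, hb⟩⟩ h
    simpa using h
  · intro e he hne
    induction e using Sym2.ind with
    | _ a b =>
      have hab : G.Adj a b := by simpa using he
      simp only [Sym2.lift_mk, glue]
      by_cases ha : a ∈ X <;> by_cases hb : b ∈ X
      · simp only [ha, hb, dif_pos]; ring
      · exact absurd ⟨(⟨a, ha⟩, ⟨b, hb⟩), by simpa using hab, rfl⟩ hne
      · exact absurd ⟨(⟨b, hb⟩, ⟨a, ha⟩), by simpa using hab.symm, Sym2.eq_swap⟩ hne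
      · simp only [ha, hb, dif_neg, not_false_eq_true]; ring
  · rintro ⟨⟨a, ha⟩, ⟨b, hb⟩⟩ _
    simp only [Sym2.lift_mk, glue, ha, hb, dif_pos, dif_neg, not_false_eq_true]
    ring

/-! ### Monochromatic rectangles and the rank of the cut matrix -/

/-- The span of the differences `x - x₀`, `x ∈ A`, over `𝔽₂`. -/
def diffSpan {ι : Type*} (A : Set (ι → Bool)) (x₀ : ι → Bool) : Submodule (ZMod 2) (ι → ZMod 2) :=
  Submodule.span (ZMod 2) ((fun x => bit ∘ x - bit ∘ x₀) '' A)

lemma ncard_le_two_pow_finrank_diffSpan {ι : Type*} [Fintype ι] (A : Set (ι → Bool))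
    (x₀ : ι → Bool) : A.ncard ≤ 2 ^ Module.finrank (ZMod 2) (diffSpan A x₀) := by
  classical
  have hinj : Function.Injective fun x : ι → Bool => bit ∘ x - bit ∘ x₀ := by
    intro x x' h
    exact bit_injective.comp_left (sub_left_injective h)
  calc A.ncard = ((fun x => bit ∘ x - bit ∘ x₀) '' A).ncard :=
        (Set.ncard_image_of_injective _ hinj).symm
    _ ≤ (diffSpan A x₀ : Set (ι → ZMod 2)).ncard :=
        Set.ncard_le_ncard Submodule.subset_span (Set.toFinite _)
    _ = Nat.card (diffSpan A x₀) := rfl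
    _ = _ := by
        rw [Module.natCard_eq_pow_finrank (K := ZMod 2), Nat.card_zmod]

/-- A monochromatic rectangle `A × B` has at most `2 ^ (n - r)` elements, `r` being the rank of the
cut matrix: `A` and `B` lie in translates of subspaces that are orthogonal under that matrix. -/
lemma ncard_mul_two_pow_rank_le {V : Type*} [Fintype V] [DecidableEq V]
    (G : SimpleGraph V) [DecidableRel G.Adj] (X : Finset V)
    (R : Set (V → Bool)) (hR : IsRectangle X R) (c : Bool) (hmono : ∀ τ ∈ R, IPG G τ = c) :
    R.ncard * 2 ^ (cutMatrix G X).rank ≤ 2 ^ Fintype.card V := by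
  obtain ⟨A, B, hAB⟩ := hR
  rcases R.eq_empty_or_nonempty with rfl | ⟨τ₀, hτ₀⟩
  · simp
  obtain ⟨hx₀, hy₀⟩ := (hAB τ₀).1 hτ₀
  set x₀ := fun v : {v : V // v ∈ X} => τ₀ v
  set y₀ := fun v : {v : V // v ∉ X} => τ₀ v
  have hval : ∀ x ∈ A, ∀ y ∈ B, ipgSum G (glue X x y) = bit c := by
    intro x hx y hy
    rw [← bit_IPG, hmono]
    rw [hAB]
    have h1 : (fun v : {v : V // v ∈ X} => glue X x y v) = x := by
      funext v; simp [glue, v.2]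
    have h2 : (fun v : {v : V // v ∉ X} => glue X x y v) = y := by
      funext v; simp [glue, v.2]
    rw [h1, h2]
    exact ⟨hx, hy⟩
  have horth : ∀ u ∈ diffSpan A x₀, ∀ w ∈ diffSpan B y₀,
      u ⬝ᵥ (cutMatrix G X).mulVec w = 0 := by
    intro u hu w hw
    induction hu using Submodule.span_induction with
    | zero => simp
    | add a b _ _ ha hb => rw [add_dotProduct, ha, hb, add_zero]
    | smul k a _ ha => rw [smul_dotProduct, ha, smul_zero]
    | mem u hu =>
      obtain ⟨x, hx, rfl⟩ := hu
      induction hw using Submodule.span_induction with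
      | zero => simp
      | add a b _ _ ha hb => rw [Matrix.mulVec_add, dotProduct_add, ha, hb, add_zero]
      | smul k a _ ha => rw [Matrix.mulVec_smul, dotProduct_smul, ha, smul_zero]
      | mem w hw =>
        obtain ⟨y, hy, rfl⟩ := hw
        simp only [ipgSum_second_difference]
        rw [hval x hx y hy, hval x₀ hx₀ y hy, hval x hx y₀ hy₀, hval x₀ hx₀ y₀ hy₀]
        ring
  have hdim := rank_add_finrank_le _ _ _ horth
  have hcardV : Fintype.card {v : V // v ∈ X} + Fintype.card {v : V // v ∉ X} =
      Fintype.card V := by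
    rw [← Fintype.card_sum]
    exact Fintype.card_congr (Equiv.sumCompl fun v => v ∈ X)
  rw [hcardV] at hdim
  have hRAB : R.ncard ≤ A.ncard * B.ncard := by
    rw [← Set.ncard_prod]
    refine Set.ncard_le_ncard_of_injOn
      (fun τ => ((fun v : {v : V // v ∈ X} => τ v), (fun v : {v : V // v ∉ X} => τ v)))
      (fun τ hτ => (hAB τ).1 hτ) ?_ (Set.toFinite _)
    intro τ _ τ' _ h
    funext v
    by_cases hv : v ∈ X
    · exact congrFun (Prod.ext_iff.1 h).1 ⟨v, hv⟩
    · exact congrFun (Prod.ext_iff.1 h).2 ⟨v, hv⟩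
  calc R.ncard * 2 ^ (cutMatrix G X).rank
      ≤ (2 ^ Module.finrank (ZMod 2) (diffSpan A x₀) *
          2 ^ Module.finrank (ZMod 2) (diffSpan B y₀)) * 2 ^ (cutMatrix G X).rank := by
        gcongr
        exact hRAB.trans (Nat.mul_le_mul (ncard_le_two_pow_finrank_diffSpan A x₀)
          (ncard_le_two_pow_finrank_diffSpan B y₀))
    _ = 2 ^ (Module.finrank (ZMod 2) (diffSpan A x₀) +
          Module.finrank (ZMod 2) (diffSpan B y₀) + (cutMatrix G X).rank) := by
        rw [pow_add, pow_add]
    _ ≤ _ := Nat.pow_le_pow_right (by norm_num) (by omega)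

/-! ### Expansion and the rank of the cut matrix -/

/-- Neighbours of `X` are the nonzero columns of `cutMatrix G X`. -/
lemma card_neighbors_le {V : Type*} [Fintype V] [DecidableEq V] (G : SimpleGraph V)
    [DecidableRel G.Adj] (Δ : ℕ) (hdeg : ∀ v, G.degree v ≤ Δ) (X : Finset V) :
    (Finset.univ.filter fun w => w ∉ X ∧ ∃ v ∈ X, G.Adj v w).card ≤
      (cutMatrix G X).rank * Δ := by
  refine le_trans ?_ (card_nonzero_cols_le (cutMatrix G X) Δ fun i => ?_)
  · rw [← Finset.card_map (Function.Embedding.subtype fun v => v ∉ X)]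
    refine Finset.card_le_card fun w hw => ?_
    simp only [Finset.mem_filter, Finset.mem_univ, true_and] at hw
    obtain ⟨hw, v, hv, hvw⟩ := hw
    simp only [Finset.mem_map, Finset.mem_filter, Finset.mem_univ, true_and]
    exact ⟨⟨w, hw⟩, ⟨⟨v, hv⟩, by simp [cutMatrix, hvw]⟩, rfl⟩
  · refine le_trans ?_ (hdeg i)
    rw [← SimpleGraph.card_neighborFinset_eq_degree,
      ← Finset.card_map (Function.Embedding.subtype fun v => v ∉ X)]
    refine Finset.card_le_card fun w hw => ?_
    simp only [Finset.mem_map, Finset.mem_filter, Finset.mem_univ, true_and] at hw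
    obtain ⟨j, hj, rfl⟩ := hw
    simpa [cutMatrix] using hj

/-- The two sides of the cut play symmetric roles: swapping them transposes the matrix. -/
lemma rank_cutMatrix_compl {V : Type*} [Fintype V] [DecidableEq V] (G : SimpleGraph V)
    [DecidableRel G.Adj] (X : Finset V) : (cutMatrix G Xᶜ).rank = (cutMatrix G X).rank := by
  rw [← Matrix.rank_transpose (cutMatrix G X)]
  have h : cutMatrix G Xᶜ = (cutMatrix G X).transpose.submatrix
      (Equiv.subtypeEquivRight fun v => Finset.mem_compl)
      (Equiv.subtypeEquivRight fun v => by simp) := by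
    ext i j
    simp [cutMatrix, G.adj_comm]
  rw [h, Matrix.rank_submatrix]

/-- Lower bound on the rank coming from expansion of the smaller side of the cut. -/
lemma expansion_le_rank_mul {V : Type*} [Fintype V] [DecidableEq V] (G : SimpleGraph V)
    [DecidableRel G.Adj] (Δ : ℕ) (d : ℝ) (hdeg : ∀ v, G.degree v ≤ Δ)
    (hexp : ExpansionAtLeast G d) (X : Finset V) :
    d * ((min X.card Xᶜ.card : ℕ) : ℝ) ≤ (cutMatrix G X).rank * Δ := by
  have key : ∀ S : Finset V, 2 * S.card ≤ Fintype.card V →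
      d * (S.card : ℝ) ≤ (cutMatrix G S).rank * Δ := by
    intro S hS
    rcases S.eq_empty_or_nonempty with rfl | hne
    · simp only [Finset.card_empty, Nat.cast_zero, mul_zero]; positivity
    · exact (hexp S hne hS).trans (by exact_mod_cast card_neighbors_le G Δ hdeg S)
  have hcard := Finset.card_add_card_compl X
  rcases le_total X.card Xᶜ.card with h | h
  · rw [min_eq_left h]
    exact key X (by omega)
  · rw [min_eq_right h, ← rank_cutMatrix_compl]
    exact key Xᶜ (by omega)

/-- Let `G` be a graph with `n` vertices, maximum degree at most `Δ`, and expansion at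
least `d` with `0 ≤ d ≤ 1`, and let `(X₁, X₁ᶜ)` be a `b`-balanced partition of the
vertices with `b > d`.  Then every combinatorial rectangle with partition `(X₁, X₁ᶜ)`
that is monochromatic with respect to `IP_G` has size at most
`2 ^ (n − n·d²·b / (2(Δ² + 1)))`. -/
theorem expander_ipg_monochromatic_rectangle_le {V : Type*} [Fintype V] [DecidableEq V]
    (G : SimpleGraph V) [DecidableRel G.Adj]
    (Δ : ℕ) (d b : ℝ) (hd0 : 0 ≤ d) (hd1 : d ≤ 1) (hdb : d < b)
    (hdeg : ∀ v, G.degree v ≤ Δ)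
    (hexp : ExpansionAtLeast G d)
    (X₁ : Finset V)
    (hbal : b * (Fintype.card V : ℝ) ≤ ((min X₁.card X₁ᶜ.card : ℕ) : ℝ))
    (R : Set (V → Bool)) (hR : IsRectangle X₁ R)
    (c : Bool) (hmono : ∀ τ ∈ R, IPG G τ = c) :
    (R.ncard : ℝ) ≤
      (2 : ℝ) ^ ((Fintype.card V : ℝ) -
        (Fintype.card V : ℝ) * d ^ 2 * b / (2 * ((Δ : ℝ) ^ 2 + 1))) := by
  have hcount := ncard_mul_two_pow_rank_le G X₁ R hR c hmono
  have hrank := expansion_le_rank_mul G Δ d hdeg hexp X₁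
  set r := (cutMatrix G X₁).rank
  set n := Fintype.card V
  have hexpo : (n : ℝ) * d ^ 2 * b / (2 * ((Δ : ℝ) ^ 2 + 1)) ≤ r := by
    rw [div_le_iff₀ (by positivity)]
    have hb : 0 ≤ b := hd0.trans hdb.le
    calc (n : ℝ) * d ^ 2 * b = d * (d * (b * n)) := by ring
      _ ≤ 1 * (d * (b * n)) := by gcongr
      _ ≤ d * ((min X₁.card X₁ᶜ.card : ℕ) : ℝ) := by rw [one_mul]; gcongr
      _ ≤ r * Δ := hrank
      _ ≤ r * (2 * ((Δ : ℝ) ^ 2 + 1)) := by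
          gcongr
          nlinarith [sq_nonneg ((Δ : ℝ) - 1)]
  have hcount' : (R.ncard : ℝ) * 2 ^ r ≤ 2 ^ n := by exact_mod_cast hcount
  calc (R.ncard : ℝ) ≤ 2 ^ n / 2 ^ r := by rwa [le_div_iff₀ (by positivity)]
    _ = (2 : ℝ) ^ ((n : ℝ) - r) := by
        rw [Real.rpow_sub (by norm_num), Real.rpow_natCast, Real.rpow_natCast]
    _ ≤ _ := Real.rpow_le_rpow_of_exponent_le (by norm_num) (by linarith)
end
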